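/- Let r ≥ 1 and let Q be a polynomial of total degree at most 2 in 3 variables (x, y, z) over Z_{2^r}. Then for all natural numbers q ≤ r and v ≤ r, all elements k, w, g, u ∈ Z_{2^r}, and every polynomial T of total degree at most 1 in the variables x, y, the sum Σ_{i=0}^{2^q - 1} Σ_{j=0}^{2^v - 1} #(k + w 2^{r-q} i + g 2^{r-v} j)_{Q, z = T(x,y) + u 2^{r-v} j} is divisible by 2^{r + ⌈min(2v, r)/2⌉ + q - 1}. -/

import Mathlib

/-!
After rescaling the two progressions, the sum counts the zeros of a quadratic function of
`(s, x, y, 2 ^ (r - v) * z)` that depends on `s` only through a term `a * s`. Solving for `s` leaves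
the zeros of a quadratic function `f (x, y, 2 ^ d * z)` modulo `2 ^ m`, and these are bounded
by induction on `m`. On a class of `(x, y, z)` modulo 2 (of `(x, y)` alone if `d` is positive, which
lowers `d` by one) the function has the form `c + 2 * ℓ + 4 * Q`. If `ℓ` is odd in some direction,
Hensel lifting along that direction counts the zeros; otherwise the whole equation can be divided
by 4, which lowers `m` by two. At `m = 1` the vanishing third differences of `f` make the number
of zeros modulo 2 even.
-/

open Finset

section GroupSums

variable {G H T A : Type*} [AddCommGroup G] [AddCommGroup H]

theorem card_ker_mul_card_of_surjective (h : H →+ G) (hh : Function.Surjective h) :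
    Nat.card h.ker * Nat.card G = Nat.card H := by
  rw [← h.ker.card_mul_index, AddSubgroup.index_ker, AddMonoidHom.range_eq_top.2 hh,
    AddSubgroup.card_top]

variable [Fintype G] [Fintype H] [Fintype T]

theorem sum_comp_of_surjective [AddCommMonoid A] (h : H →+ G) (hh : Function.Surjective h)
    (φ : G → A) : ∑ x, φ (h x) = Nat.card h.ker • ∑ y, φ y := by
  classical
  have card_fiber (y : G) : #{x | h x = y} = Nat.card h.ker := by
    rw [AddMonoidHom.card_fiber_eq_of_mem_range h (hh y) (zero_mem h.range), ← Fintype.card_subtype,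
      ← Nat.card_eq_fintype_card]
    rfl
  rw [← Finset.sum_fiberwise univ h, smul_sum]
  refine sum_congr rfl fun y _ ↦ ?_
  rw [sum_congr rfl (g := fun _ ↦ φ y) (by simp +contextual), sum_const, card_fiber]

theorem dvd_card_ker_smul_sum [CommSemiring A] {a : A} (h : H →+ G) (φ : G → A)
    (ha : ∀ g, a ∣ ∑ x, φ (g + h x)) : a ∣ Nat.card h.ker • ∑ y, φ y := by
  classical
  have sum_coset (g : G) :
      ∑ k : h.range, φ (g + k) = ∑ y : G with QuotientAddGroup.mk (s := h.range) y = g, φ y :=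
    sum_bij (fun k _ ↦ g + k) (fun k _ ↦ by simp) (fun _ _ _ _ ↦ by simp)
      (fun y hy ↦ ⟨⟨-g + y, QuotientAddGroup.eq.1 (mem_filter.1 hy).2.symm⟩, by simp⟩)
      fun _ _ ↦ rfl
  rw [← Finset.sum_fiberwise univ (QuotientAddGroup.mk (s := h.range)), smul_sum]
  refine dvd_sum fun c _ ↦ ?_
  obtain ⟨g, rfl⟩ := QuotientAddGroup.mk_surjective c
  rw [← sum_coset, ← h.ker_rangeRestrict,
    ← sum_comp_of_surjective h.rangeRestrict h.rangeRestrict_surjective fun k ↦ φ (g + k)]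
  exact ha g

theorem sum_sum_add_eq_card_smul_sum [AddCommMonoid A] (s : T → G) (φ : G → A) :
    ∑ x, ∑ t, φ (x + s t) = Fintype.card T • ∑ x, φ x := by
  rw [sum_comm, ← card_univ, ← sum_const]
  exact sum_congr rfl fun t _ ↦ Equiv.sum_comp (Equiv.addRight (s t)) φ

end GroupSums

section PolynomialSubstitution

variable {R A σ : Type*} [CommRing R] [CommRing A] [Algebra R A]

theorem aeval_mem_pow_of_totalDegree_le {S : Submodule R A} (one_mem : 1 ∈ S) {a : σ → A}
    (ha : ∀ i, a i ∈ S) {p : MvPolynomial σ R} {n : ℕ} (hp : p.totalDegree ≤ n) :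
    MvPolynomial.aeval a p ∈ S ^ n := by
  rw [MvPolynomial.aeval_def, MvPolynomial.eval₂_eq]
  refine Submodule.sum_mem _ fun s hs ↦ ?_
  have monomial_mem (t : Finset σ) : ∏ i ∈ t, a i ^ s i ∈ S ^ ∑ i ∈ t, s i := by
    classical
    induction t using Finset.induction_on with
    | empty => simpa using Submodule.one_le.1 (le_refl (1 : Submodule R A))
    | insert i t hi ih =>
      rw [prod_insert hi, sum_insert hi, pow_add]
      exact Submodule.mul_mem_mul (Submodule.pow_mem_pow S (ha i) _) ih
  rw [← Algebra.smul_def]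
  exact Submodule.smul_mem _ _ (pow_le_pow_right₀ (Submodule.one_le.2 one_mem)
    ((MvPolynomial.le_totalDegree hs).trans hp) (monomial_mem _))

theorem aeval_pi_apply {M : Type*} (a : σ → M → R) (p : MvPolynomial σ R) (x : M) :
    MvPolynomial.aeval a p x = MvPolynomial.eval (fun i ↦ a i x) p := by
  simpa using MvPolynomial.comp_aeval_apply a (Pi.evalAlgHom R (fun _ : M ↦ R) x) p

end PolynomialSubstitution

section QuadraticFunctions

variable (R M : Type*) [CommRing R] [AddCommGroup M] [Module R M]

/-- The functions `M → R` of the form `x ↦ c + ℓ x` with `ℓ` linear. -/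
def affineFunctions : Submodule R (M → R) where
  carrier := {f | ∃ c, ∃ ℓ : M →ₗ[R] R, ∀ x, f x = c + ℓ x}
  zero_mem' := ⟨0, 0, by simp⟩
  add_mem' := by
    rintro f g ⟨c, ℓ, hf⟩ ⟨c', ℓ', hg⟩
    exact ⟨c + c', ℓ + ℓ', fun x ↦ by simp only [Pi.add_apply, hf, hg, LinearMap.add_apply]; ring⟩
  smul_mem' := by
    rintro a f ⟨c, ℓ, hf⟩
    exact ⟨a * c, a • ℓ, fun x ↦ by simp [hf, mul_add]⟩

/-- The functions `M → R` of the form `x ↦ c + ℓ x + Q x` with `ℓ` linear and `Q` a quadratic form: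
the coordinate-free version of polynomials of total degree at most 2. -/
def quadraticFunctions : Submodule R (M → R) where
  carrier := {f | ∃ c, ∃ ℓ : M →ₗ[R] R, ∃ Q : QuadraticForm R M, ∀ x, f x = c + ℓ x + Q x}
  zero_mem' := ⟨0, 0, 0, by simp⟩
  add_mem' := by
    rintro f g ⟨c, ℓ, Q, hf⟩ ⟨c', ℓ', Q', hg⟩
    refine ⟨c + c', ℓ + ℓ', Q + Q', fun x ↦ ?_⟩
    simp only [Pi.add_apply, hf, hg, LinearMap.add_apply, add_apply]
    ring
  smul_mem' := by
    rintro a f ⟨c, ℓ, Q, hf⟩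
    exact ⟨a * c, a • ℓ, a • Q, fun x ↦ by simp [hf, mul_add]⟩

variable {R M}

theorem const_mem_affineFunctions (c : R) : (fun _ ↦ c) ∈ affineFunctions R M :=
  ⟨c, 0, by simp⟩

theorem coe_linearMap_mem_affineFunctions (ℓ : M →ₗ[R] R) : ⇑ℓ ∈ affineFunctions R M :=
  ⟨0, ℓ, by simp⟩

theorem affineFunctions_le_quadraticFunctions : affineFunctions R M ≤ quadraticFunctions R M :=
  fun _ ⟨c, ℓ, hf⟩ ↦ ⟨c, ℓ, 0, by simp [hf]⟩

theorem affineFunctions_pow_two_le : affineFunctions R M ^ 2 ≤ quadraticFunctions R M := by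
  rw [pow_two, Submodule.mul_le]
  rintro f ⟨c, ℓ, hf⟩ g ⟨c', ℓ', hg⟩
  refine ⟨c * c', c • ℓ' + c' • ℓ, QuadraticMap.linMulLin ℓ ℓ', fun x ↦ ?_⟩
  simp only [Pi.mul_apply, hf, hg, LinearMap.add_apply, LinearMap.smul_apply, smul_eq_mul,
    QuadraticMap.linMulLin_apply]
  ring

variable {σ : Type*} {a : σ → M → R} {p : MvPolynomial σ R}

theorem eval_mem_affineFunctions (ha : ∀ i, a i ∈ affineFunctions R M) (hp : p.totalDegree ≤ 1) :
    (fun x ↦ MvPolynomial.eval (fun i ↦ a i x) p) ∈ affineFunctions R M := by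
  simpa only [pow_one, ← aeval_pi_apply] using
    aeval_mem_pow_of_totalDegree_le (const_mem_affineFunctions 1) ha hp

theorem eval_mem_quadraticFunctions (ha : ∀ i, a i ∈ affineFunctions R M)
    (hp : p.totalDegree ≤ 2) :
    (fun x ↦ MvPolynomial.eval (fun i ↦ a i x) p) ∈ quadraticFunctions R M := by
  simpa only [← aeval_pi_apply] using affineFunctions_pow_two_le
    (aeval_mem_pow_of_totalDegree_le (const_mem_affineFunctions 1) ha hp)

theorem exists_expansion_of_mem_quadraticFunctions {f : M → R} (hf : f ∈ quadraticFunctions R M)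
    (x : M) : ∃ ℓ : M →ₗ[R] R, ∃ Q : QuadraticForm R M,
      ∀ (t : R) (y : M), f (x + t • y) = f x + t * ℓ y + t ^ 2 * Q y := by
  obtain ⟨c, ℓ, Q, hf⟩ := hf
  refine ⟨ℓ + Q.polarBilin x, Q, fun t y ↦ ?_⟩
  simp only [hf, map_add, map_smul, QuadraticMap.map_add Q x, QuadraticMap.map_smul,
    QuadraticMap.polar_smul_right, LinearMap.add_apply, QuadraticMap.polarBilin_apply_apply,
    smul_eq_mul]
  ring

theorem two_dvd_sum_cube_of_mem_quadraticFunctions {f : M → R} (hf : f ∈ quadraticFunctions R M)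
    (a b c : M) :
    2 ∣ f 0 + f a + f b + f (a + b) + f c + f (c + a) + f (c + b) + f (c + (a + b)) := by
  obtain ⟨k, ℓ, Q, hf⟩ := hf
  have second_difference (x : M) :
      f (x + (a + b)) = f (x + a) + f (x + b) - f x + QuadraticMap.polar Q a b := by
    simp only [hf, ← add_assoc, map_add, QuadraticMap.map_add Q (x + a) b, QuadraticMap.map_add Q x,
      QuadraticMap.polar_add_left]
    ring
  have h0 := second_difference 0
  simp only [zero_add] at h0
  rw [h0, second_difference c]
  exact ⟨f a + f b + f (c + a) + f (c + b) + QuadraticMap.polar Q a b, by ring⟩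

end QuadraticFunctions

section PowersOfTwo

variable {N : ℕ}

theorem castHom_eq_zero_iff_natCast_dvd {m n : ℕ} [NeZero m] (h : n ∣ m) (x : ZMod m) :
    ZMod.castHom h (ZMod n) x = 0 ↔ (n : ZMod m) ∣ x := by
  constructor
  · intro hx
    rw [ZMod.castHom_apply, ZMod.cast_eq_val, ZMod.natCast_eq_zero_iff] at hx
    rw [← ZMod.natCast_zmod_val x]
    exact Nat.cast_dvd_cast hx
  · rintro ⟨y, rfl⟩
    rw [map_mul, map_natCast, ZMod.natCast_self, zero_mul]

theorem exists_eq_val_castHom_add_mul {m n : ℕ} [NeZero m] [NeZero n] (h : n ∣ m) (x : ZMod m) :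
    ∃ y, x = (ZMod.castHom h (ZMod n) x).val + n * y := by
  obtain ⟨y, hy⟩ := (castHom_eq_zero_iff_natCast_dvd h (x - (ZMod.castHom h (ZMod n) x).val)).1
    (by rw [map_sub, map_natCast, ZMod.natCast_zmod_val, sub_self])
  exact ⟨y, sub_eq_iff_eq_add'.1 hy⟩

theorem two_pow_eq_zero (N : ℕ) : (2 : ZMod (2 ^ N)) ^ N = 0 := by
  exact_mod_cast ZMod.natCast_self (2 ^ N)

theorem natCast_two_pow_dvd_natCast_iff {m : ℕ} (hm : m ≤ N) (a : ℕ) :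
    (2 : ZMod (2 ^ N)) ^ m ∣ a ↔ 2 ^ m ∣ a := by
  have := castHom_eq_zero_iff_natCast_dvd (pow_dvd_pow 2 hm) (a : ZMod (2 ^ N))
  rwa [map_natCast, ZMod.natCast_eq_zero_iff, Nat.cast_pow, Nat.cast_ofNat, Iff.comm] at this

theorem two_pow_add_dvd_two_pow_mul_iff {k e : ℕ} (h : k + e ≤ N) (x : ZMod (2 ^ N)) :
    2 ^ (k + e) ∣ 2 ^ e * x ↔ 2 ^ k ∣ x := by
  obtain ⟨a, rfl⟩ := ZMod.natCast_zmod_surjective x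
  have := natCast_two_pow_dvd_natCast_iff h (2 ^ e * a)
  push_cast at this
  rw [this, natCast_two_pow_dvd_natCast_iff (by omega), pow_add, mul_comm,
    Nat.mul_dvd_mul_iff_left (by positivity)]

theorem isUnit_or_two_dvd (x : ZMod (2 ^ N)) : IsUnit x ∨ 2 ∣ x := by
  obtain ⟨a, rfl⟩ := ZMod.natCast_zmod_surjective x
  rcases Nat.even_or_odd a with ha | ha
  · exact .inr (by exact_mod_cast Nat.cast_dvd_cast (α := ZMod (2 ^ N)) ha.two_dvd)
  · exact .inl ((ZMod.isUnit_iff_coprime _ _).2 (Nat.Coprime.pow_right _ ha.coprime_two_right))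

theorem isNilpotent_two_mul (x : ZMod (2 ^ N)) : IsNilpotent (2 * x) :=
  (Commute.all _ _).isNilpotent_mul_right ⟨N, two_pow_eq_zero N⟩

theorem isUnit_add_two_mul {b : ZMod (2 ^ N)} (hb : IsUnit b) (x : ZMod (2 ^ N)) :
    IsUnit (b + 2 * x) :=
  (isNilpotent_two_mul x).isUnit_add_left_of_commute hb (Commute.all _ _)

theorem exists_eq_two_pow_mul_isUnit (x : ZMod (2 ^ N)) :
    ∃ e ≤ N, ∃ b : ZMod (2 ^ N), IsUnit b ∧ x = 2 ^ e * b := by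
  obtain ⟨d, hd, b, hb, rfl⟩ := ZMod.eq_unit_mul_divisor x
  obtain ⟨e, he, rfl⟩ := (Nat.dvd_prime_pow Nat.prime_two).1 hd
  exact ⟨e, he, b, hb, by push_cast; ring⟩

theorem bijective_quadratic {a b : ZMod (2 ^ N)} (hb : IsUnit b) :
    Function.Bijective fun t ↦ b * t + 2 * a * t ^ 2 := by
  refine Finite.injective_iff_bijective.1 fun s t h ↦ ?_
  have : (b + 2 * (a * (s + t))) * (s - t) = 0 := by linear_combination h
  exact sub_eq_zero.1 ((isUnit_add_two_mul hb _).mul_right_eq_zero.1 this)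

end PowersOfTwo

section ZeroCount

variable {N m e : ℕ} {M M' : Type*} [Fintype M] [Fintype M']

open Classical in
/-- The number of zeros of `f` modulo `2 ^ m`. It is meant for `m ≤ N`; the variables range over the
full modulus `2 ^ N`, so lowering `m` does not change the domain. -/
noncomputable def zeroCount (m : ℕ) (f : M → ZMod (2 ^ N)) : ℕ :=
  #{x | 2 ^ m ∣ f x}

open Classical in
theorem zeroCount_eq_sum (m : ℕ) (f : M → ZMod (2 ^ N)) :
    zeroCount m f = ∑ x, if 2 ^ m ∣ f x then 1 else 0 :=
  card_filter _ _

theorem zeroCount_congr {f g : M → ZMod (2 ^ N)} (h : ∀ x, 2 ^ m ∣ f x ↔ 2 ^ e ∣ g x) :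
    zeroCount m f = zeroCount e g := by
  classical
  simp only [zeroCount_eq_sum, h]

theorem zeroCount_zero (f : M → ZMod (2 ^ N)) : zeroCount 0 f = Fintype.card M := by
  simp [zeroCount_eq_sum]

theorem zeroCount_eq_zero {f : M → ZMod (2 ^ N)} (h : ∀ x, ¬2 ^ m ∣ f x) : zeroCount m f = 0 := by
  simp [zeroCount_eq_sum, h]

theorem card_dvd_zeroCount_one_add_two_mul (c : ZMod (2 ^ N)) (f : M → ZMod (2 ^ N)) :
    Fintype.card M ∣ zeroCount 1 (fun x ↦ c + 2 * f x) := by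
  by_cases hc : 2 ∣ c
  · rw [← zeroCount_zero fun x ↦ c + 2 * f x]
    exact dvd_of_eq (zeroCount_congr fun x ↦ by simp [dvd_add hc (dvd_mul_right 2 (f x))])
  · rw [zeroCount_eq_zero fun x hx ↦ hc ((dvd_add_left (dvd_mul_right _ _)).1 (by simpa using hx))]
    exact dvd_zero _

theorem two_dvd_zeroCount_one (hN : N ≠ 0) {f : M → ZMod (2 ^ N)} (hM : 2 ∣ Fintype.card M)
    (hf : 2 ∣ ∑ x, f x) : 2 ∣ zeroCount 1 f := by
  classical
  let ρ := ZMod.castHom (dvd_pow_self 2 hN) (ZMod 2)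
  have ρ_eq_zero (a : ZMod (2 ^ N)) : ρ a = 0 ↔ 2 ∣ a :=
    castHom_eq_zero_iff_natCast_dvd (dvd_pow_self 2 hN) a
  have indicator (a : ZMod 2) : (if a = 0 then 1 else 0) = 1 + a := by
    revert a; decide
  rw [← ZMod.natCast_eq_zero_iff, zeroCount_eq_sum]
  simp only [pow_one, ← ρ_eq_zero, Nat.cast_sum, Nat.cast_ite, Nat.cast_one, Nat.cast_zero,
    indicator]
  rw [sum_add_distrib, ← map_sum, (ρ_eq_zero _).2 hf, sum_const, card_univ, nsmul_one,
    (ZMod.natCast_eq_zero_iff _ _).2 hM, add_zero]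

theorem zeroCount_comp_of_bijective {σ : M' → M} (hσ : σ.Bijective) (f : M → ZMod (2 ^ N)) :
    zeroCount m (fun x ↦ f (σ x)) = zeroCount m f := by
  classical
  simp only [zeroCount_eq_sum]
  exact hσ.sum_comp fun x ↦ if 2 ^ m ∣ f x then 1 else 0

theorem zeroCount_comp_of_surjective [AddCommGroup M] [AddCommGroup M'] (ρ : M' →+ M)
    (hρ : Function.Surjective ρ) (f : M → ZMod (2 ^ N)) :
    zeroCount m (fun x ↦ f (ρ x)) = Nat.card ρ.ker * zeroCount m f := by
  classical
  simp only [zeroCount_eq_sum]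
  exact sum_comp_of_surjective ρ hρ fun y ↦ if 2 ^ m ∣ f y then 1 else 0

theorem zeroCount_comp_snd (f : M → ZMod (2 ^ N)) :
    zeroCount m (fun x : M' × M ↦ f x.2) = Fintype.card M' * zeroCount m f := by
  classical
  simp only [zeroCount_eq_sum]
  rw [Fintype.sum_prod_type]
  exact sum_const (∑ y, if 2 ^ m ∣ f y then 1 else 0)

theorem dvd_mul_card_ker_mul_zeroCount [AddCommGroup M] [AddCommGroup M'] (h : M' →+ M)
    {f : M → ZMod (2 ^ N)} {a b : ℕ} (hf : ∀ g, a ∣ b * zeroCount m (fun x ↦ f (g + h x))) :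
    a ∣ b * (Nat.card h.ker * zeroCount m f) := by
  classical
  have := dvd_card_ker_smul_sum h (fun y ↦ b * if 2 ^ m ∣ f y then 1 else 0)
    fun g ↦ by simpa only [zeroCount_eq_sum, mul_sum] using hf g
  rwa [← mul_sum, ← zeroCount_eq_sum, smul_eq_mul, mul_left_comm] at this

theorem two_pow_mul_zeroCount_id (hm : m ≤ N) :
    2 ^ m * zeroCount m (fun x : ZMod (2 ^ N) ↦ x) = 2 ^ N := by
  classical
  let ρ : ZMod (2 ^ N) →+ ZMod (2 ^ m) :=
    (ZMod.castHom (pow_dvd_pow 2 hm) (ZMod (2 ^ m))).toAddMonoidHom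
  have hρ : Function.Surjective ρ := ZMod.castHom_surjective (pow_dvd_pow 2 hm)
  have card_domain := card_ker_mul_card_of_surjective ρ hρ
  have card_kernel := sum_comp_of_surjective ρ hρ fun y ↦ if y = 0 then 1 else 0
  rw [Nat.card_zmod, Nat.card_zmod] at card_domain
  simp only [sum_ite_eq', mem_univ, if_true, smul_eq_mul, mul_one] at card_kernel
  refine Eq.trans ?_ card_domain
  rw [← card_kernel, zeroCount_eq_sum, mul_comm]
  refine congrArg (· * 2 ^ m) (sum_congr rfl fun x _ ↦ if_congr ?_ rfl rfl)
  exact_mod_cast (castHom_eq_zero_iff_natCast_dvd (pow_dvd_pow 2 hm) x).symm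

theorem two_pow_mul_zeroCount_quadratic (hem : e ≤ m) (hm : m ≤ N) {a b : ZMod (2 ^ N)}
    (hb : IsUnit b) (c : ZMod (2 ^ N)) [Decidable (2 ^ e ∣ c)] :
    2 ^ m * zeroCount m (fun t ↦ c + 2 ^ e * (b * t + 2 * a * t ^ 2)) =
      2 ^ N * if 2 ^ e ∣ c then 2 ^ e else 0 := by
  obtain ⟨k, rfl⟩ := Nat.exists_eq_add_of_le' hem
  split_ifs with hc
  · obtain ⟨y, rfl⟩ := hc
    have bijective := (Equiv.addLeft y).bijective.comp (bijective_quadratic (a := a) hb)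
    have divided : zeroCount (k + e) (fun t ↦ 2 ^ e * y + 2 ^ e * (b * t + 2 * a * t ^ 2)) =
        zeroCount k fun t ↦ y + (b * t + 2 * a * t ^ 2) :=
      zeroCount_congr fun t ↦ by rw [← mul_add, two_pow_add_dvd_two_pow_mul_iff hm]
    have translated := zeroCount_comp_of_bijective (m := k) bijective fun t ↦ t
    calc _ = (2 ^ k * zeroCount k fun t : ZMod (2 ^ N) ↦ t) * 2 ^ e := by
          rw [divided, ← translated, pow_add, mul_right_comm]
          rfl
      _ = 2 ^ N * 2 ^ e := by rw [two_pow_mul_zeroCount_id (by omega)]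
  · rw [zeroCount_eq_zero, mul_zero, mul_zero]
    exact fun t ht ↦ hc ((dvd_add_left (dvd_mul_right _ _)).1 ((pow_dvd_pow 2 hem).trans ht))

variable [AddCommGroup M] [Module (ZMod (2 ^ N)) M]

theorem two_pow_mul_zeroCount_of_forall_translate (hem : e ≤ m) (hm : m ≤ N)
    {f : M → ZMod (2 ^ N)} (u : M)
    (hf : ∀ x, ∃ a b, IsUnit b ∧ ∀ t : ZMod (2 ^ N),
      f (x + t • u) = f x + 2 ^ e * (b * t + 2 * a * t ^ 2)) :
    2 ^ m * zeroCount m f = 2 ^ e * zeroCount e f := by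
  classical
  have line_count (x : M) : 2 ^ m * zeroCount m (fun t : ZMod (2 ^ N) ↦ f (x + t • u)) =
      2 ^ N * if 2 ^ e ∣ f x then 2 ^ e else 0 := by
    obtain ⟨a, b, hb, hf⟩ := hf x
    simp only [hf, two_pow_mul_zeroCount_quadratic hem hm hb]
  have average := sum_sum_add_eq_card_smul_sum (fun t : ZMod (2 ^ N) ↦ t • u)
    fun x ↦ if 2 ^ m ∣ f x then 1 else 0
  simp only [← zeroCount_eq_sum, ZMod.card, smul_eq_mul] at average
  refine Nat.eq_of_mul_eq_mul_left (Nat.two_pow_pos N) ?_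
  calc 2 ^ N * (2 ^ m * zeroCount m f) = ∑ x, 2 ^ N * if 2 ^ e ∣ f x then 2 ^ e else 0 := by
        rw [mul_left_comm, ← average, mul_sum]
        exact sum_congr rfl fun x _ ↦ line_count x
    _ = 2 ^ N * (2 ^ e * zeroCount e f) := by
        simp only [zeroCount_eq_sum, mul_sum, mul_ite, mul_one, mul_zero]

/-- `x ↦ c + 2 ℓ x + 4 Q x` is what a quadratic function restricts to on a class modulo 2. -/
theorem two_pow_mul_zeroCount_of_isUnit {k : ℕ} (hkm : k + 1 ≤ m) (hm : m ≤ N)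
    {M' : Type*} [AddCommGroup M'] [Module (ZMod (2 ^ N)) M'] (D : M →ₗ[ZMod (2 ^ N)] M')
    (c : ZMod (2 ^ N)) (ℓ : M' →ₗ[ZMod (2 ^ N)] ZMod (2 ^ N)) (Q : QuadraticForm (ZMod (2 ^ N)) M')
    {u : M} {u' : M'} (hu : D u = (2 : ZMod (2 ^ N)) ^ k • u') (hℓ : IsUnit (ℓ u')) :
    2 ^ m * zeroCount m (fun x ↦ c + 2 * ℓ (D x) + 4 * Q (D x)) =
      2 ^ (k + 1) * zeroCount (k + 1) (fun x ↦ c + 2 * ℓ (D x) + 4 * Q (D x)) := by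
  refine two_pow_mul_zeroCount_of_forall_translate hkm hm u fun x ↦
    ⟨2 ^ k * Q u', _, isUnit_add_two_mul hℓ (QuadraticMap.polar Q (D x) u'), fun t ↦ ?_⟩
  simp only [map_add, map_smul, hu, QuadraticMap.map_add Q (D x), QuadraticMap.map_smul,
    QuadraticMap.polar_smul_right, smul_eq_mul]
  ring

end ZeroCount

section DensityRecursion

theorem dvd_two_pow_mul_of_le {a n i j : ℕ} (h : a ∣ 2 ^ i * n) (hij : i ≤ j) : a ∣ 2 ^ j * n :=
  h.trans (Nat.mul_dvd_mul_right (Nat.pow_dvd_pow 2 hij) n)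

theorem card_ker_prodMap {G G' H H' : Type*} [AddCommGroup G] [AddCommGroup G'] [AddCommGroup H]
    [AddCommGroup H'] (f : G →+ H) (g : G' →+ H') :
    Nat.card (f.prodMap g).ker = Nat.card f.ker * Nat.card g.ker := by
  rw [AddMonoidHom.ker_prodMap, Nat.card_congr (AddSubgroup.prodEquiv _ _).toEquiv, Nat.card_prod]

variable {N m d : ℕ}

theorem card_ker_two_mul (hN : N ≠ 0) :
    Nat.card (AddMonoidHom.mulLeft (2 : ZMod (2 ^ N))).ker = 2 := by
  obtain ⟨n, rfl⟩ := Nat.exists_eq_succ_of_ne_zero hN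
  have mem_ker (x : ZMod (2 ^ (n + 1))) : 2 * x = 0 ↔ 2 ^ n ∣ x := by
    rw [← two_pow_add_dvd_two_pow_mul_iff le_rfl, two_pow_eq_zero, zero_dvd_iff, pow_one]
  have card_eq : Nat.card (AddMonoidHom.mulLeft (2 : ZMod (2 ^ (n + 1)))).ker =
      zeroCount n fun x : ZMod (2 ^ (n + 1)) ↦ x := by
    classical
    rw [zeroCount, ← Fintype.card_subtype, ← Nat.card_eq_fintype_card]
    exact Nat.card_congr (Equiv.subtypeEquivRight mem_ker)
  have := two_pow_mul_zeroCount_id n.le_succ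
  rw [card_eq]
  exact Nat.eq_of_mul_eq_mul_left (Nat.two_pow_pos n) (this.trans (pow_succ 2 n))

/-- The coordinate space `(ℤ/2^N)³`. -/
abbrev Space (N : ℕ) : Type := ZMod (2 ^ N) × ZMod (2 ^ N) × ZMod (2 ^ N)

theorem card_space (N : ℕ) : Fintype.card (Space N) = 2 ^ (3 * N) := by
  simp only [Fintype.card_prod, ZMod.card]
  ring

/-- The map `(x, y, z) ↦ (x, y, 2 ^ d * z)`, which makes the last coordinate run through the
multiples of `2 ^ d`. -/
def lastScale (d : ℕ) : Space N →ₗ[ZMod (2 ^ N)] Space N :=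
  .prodMap .id (.prodMap .id ((2 : ZMod (2 ^ N)) ^ d • .id))

theorem lastScale_apply (x y z : ZMod (2 ^ N)) : lastScale d (x, y, z) = (x, y, 2 ^ d * z) := rfl

theorem lastScale_zero (x : Space N) : lastScale 0 x = x := by
  simp [lastScale]

/-- The bound on zeros modulo `2 ^ m` that is proved by induction on `m`: along `lastScale d`, a
quadratic function has `2 ^ (3 * N - 1 - max m (3 * m / 2 - d))` dividing its number of zeros. The
subtracted terms are moved to the right as a power of 2, since subtraction would truncate. -/
def ZeroCountBound (N d m : ℕ) : Prop :=
  ∀ f ∈ quadraticFunctions (ZMod (2 ^ N)) (Space N),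
    2 ^ (3 * N) ∣ 2 ^ (1 + max m (3 * m / 2 - d)) * zeroCount m (fun x ↦ f (lastScale d x))

theorem two_pow_dvd_zeroCount_add_four_mul (hm : 1 ≤ m) (hmN : m ≤ N)
    (ih : ∀ k < m, ZeroCountBound N d k) (c : ZMod (2 ^ N)) {g : Space N → ZMod (2 ^ N)}
    (hg : g ∈ quadraticFunctions (ZMod (2 ^ N)) (Space N)) :
    2 ^ (3 * N) ∣ 2 ^ max (m - 1) (3 * m / 2 - d - 2) *
      zeroCount m (fun x ↦ c + 4 * g (lastScale d x)) := by
  obtain rfl | ⟨k, rfl⟩ : m = 1 ∨ ∃ k, m = k + 2 := by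
    obtain h | h := hm.eq_or_lt
    exacts [.inl h.symm, .inr (Nat.exists_eq_add_of_le' h)]
  · have card_dvd := card_dvd_zeroCount_one_add_two_mul c fun x ↦ 2 * g (lastScale d x)
    simp only [← mul_assoc, card_space] at card_dvd
    norm_num at card_dvd
    exact card_dvd.mul_left _
  have four_eq : (4 : ZMod (2 ^ N)) = 2 ^ 2 := by norm_num
  by_cases hc : 2 ^ 2 ∣ c
  · obtain ⟨c, rfl⟩ := hc
    have divided : zeroCount (k + 2) (fun x ↦ 2 ^ 2 * c + 4 * g (lastScale d x)) =
        zeroCount k fun x ↦ c + g (lastScale d x) :=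
      zeroCount_congr fun x ↦ by rw [four_eq, ← mul_add, two_pow_add_dvd_two_pow_mul_iff hmN]
    rw [divided]
    have bound := ih k (by omega) (fun x ↦ c + g x) (add_mem
      (affineFunctions_le_quadraticFunctions (const_mem_affineFunctions c)) hg)
    exact dvd_two_pow_mul_of_le bound (by omega)
  · rw [zeroCount_eq_zero, mul_zero]
    · exact dvd_zero _
    · rw [four_eq]
      exact fun x hx ↦ hc ((dvd_add_left (dvd_mul_right _ _)).1
        ((pow_dvd_pow 2 (Nat.le_add_left 2 k)).trans hx))

theorem exists_eq_two_mul_add_last {ℓ : Space N →ₗ[ZMod (2 ^ N)] ZMod (2 ^ N)}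
    (h₁ : 2 ∣ ℓ (1, 0, 0)) (h₂ : 2 ∣ ℓ (0, 1, 0)) :
    ∃ ℓ' : Space N →ₗ[ZMod (2 ^ N)] ZMod (2 ^ N), ∀ x, ℓ x = 2 * ℓ' x + ℓ (0, 0, 1) * x.2.2 := by
  obtain ⟨a, ha⟩ := h₁
  obtain ⟨b, hb⟩ := h₂
  refine ⟨a • LinearMap.fst _ _ _ + b • LinearMap.fst _ _ _ ∘ₗ LinearMap.snd _ _ _,
    fun ⟨x, y, z⟩ ↦ ?_⟩
  have expand : ((x, y, z) : Space N) = x • (1, 0, 0) + y • (0, 1, 0) + z • (0, 0, 1) := by simp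
  rw [expand, map_add, map_add, map_smul, map_smul, map_smul, ha, hb]
  simp only [smul_eq_mul, Prod.smul_mk, Prod.mk_add_mk, LinearMap.add_apply, LinearMap.smul_apply,
    LinearMap.comp_apply, LinearMap.fst_apply, LinearMap.snd_apply]
  ring

theorem two_pow_dvd_zeroCount_of_isUnit (hm : 1 ≤ m) (hmN : m ≤ N) (c : ZMod (2 ^ N))
    {ℓ : Space N →ₗ[ZMod (2 ^ N)] ZMod (2 ^ N)} (Q : QuadraticForm (ZMod (2 ^ N)) (Space N))
    {u : Space N} (hu : lastScale d u = u) (hℓ : IsUnit (ℓ u)) :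
    2 ^ (3 * N) ∣ 2 ^ (m - 1) *
      zeroCount m (fun x ↦ c + 2 * ℓ (lastScale d x) + 4 * Q (lastScale d x)) := by
  have lift := two_pow_mul_zeroCount_of_isUnit (k := 0) hm hmN (lastScale d) c ℓ Q
    (u' := u) (by rw [hu, pow_zero, one_smul]) hℓ
  have card_dvd := card_dvd_zeroCount_one_add_two_mul c
    fun x ↦ ℓ (lastScale d x) + 2 * Q (lastScale d x)
  simp only [mul_add, ← mul_assoc, ← add_assoc, card_space] at card_dvd
  norm_num at card_dvd
  obtain ⟨k, rfl⟩ := Nat.exists_eq_add_of_le' hm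
  rw [zero_add, pow_one, pow_succ', mul_assoc] at lift
  rwa [Nat.add_sub_cancel, Nat.eq_of_mul_eq_mul_left two_pos lift]

/-- Up to a multiple of 4 that joins `4 * Q`, here `2 * ℓ` is twice a multiple of the last
coordinate, which `lastScale d` makes divisible by `2 ^ (d + 1)`: it disappears modulo `2 ^ m` for
small `m`, and larger `m` are reduced to `m = d + 1` by Hensel lifting along the last coordinate. -/
theorem two_pow_dvd_zeroCount_of_last_isUnit (hm : 1 ≤ m) (hmN : m ≤ N)
    (ih : ∀ k < m, ZeroCountBound N d k) (c : ZMod (2 ^ N))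
    {ℓ ℓ' : Space N →ₗ[ZMod (2 ^ N)] ZMod (2 ^ N)} {Q : QuadraticForm (ZMod (2 ^ N)) (Space N)}
    (hℓ : ∀ x, ℓ x = 2 * ℓ' x + ℓ (0, 0, 1) * x.2.2) (hunit : IsUnit (ℓ (0, 0, 1))) :
    2 ^ (3 * N) ∣ 2 ^ (m - 1) *
      zeroCount m (fun x ↦ c + 2 * ℓ (lastScale d x) + 4 * Q (lastScale d x)) := by
  have small {e : ℕ} (he : 1 ≤ e) (hem : e ≤ m) (hed : e ≤ d + 1) : 2 ^ (3 * N) ∣ 2 ^ (e - 1) *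
      zeroCount e (fun x ↦ c + 2 * ℓ (lastScale d x) + 4 * Q (lastScale d x)) := by
    have drop_last : zeroCount e (fun x ↦ c + 2 * ℓ (lastScale d x) + 4 * Q (lastScale d x)) =
        zeroCount e fun x ↦ c + 4 * (ℓ' (lastScale d x) + Q (lastScale d x)) := by
      refine zeroCount_congr fun ⟨x, y, z⟩ ↦ (dvd_iff_dvd_of_dvd_sub ?_)
      refine (pow_dvd_pow 2 hed).trans ⟨ℓ (0, 0, 1) * z, ?_⟩
      rw [hℓ, lastScale_apply]
      ring
    rw [drop_last]
    have four_mul := two_pow_dvd_zeroCount_add_four_mul (g := fun x ↦ ℓ' x + Q x) he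
      (hem.trans hmN) (fun k hk ↦ ih k (hk.trans_le hem)) c ⟨0, ℓ', Q, by simp⟩
    exact dvd_two_pow_mul_of_le four_mul (by omega)
  obtain hmd | hdm := le_total m (d + 1)
  · exact small hm le_rfl hmd
  have lift := two_pow_mul_zeroCount_of_isUnit hdm hmN (lastScale d) c ℓ Q (u := (0, 0, 1))
    (by simp [lastScale_apply]) hunit
  obtain ⟨k, rfl⟩ := Nat.exists_eq_add_of_le' hm
  rw [pow_succ', pow_succ', mul_assoc, mul_assoc] at lift
  rw [Nat.add_sub_cancel, Nat.eq_of_mul_eq_mul_left two_pos lift]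
  exact small le_add_self hdm le_rfl

theorem two_pow_dvd_zeroCount_add_two_mul (hm : 1 ≤ m) (hmN : m ≤ N)
    (ih : ∀ k < m, ZeroCountBound N d k) (c : ZMod (2 ^ N))
    (ℓ : Space N →ₗ[ZMod (2 ^ N)] ZMod (2 ^ N)) (Q : QuadraticForm (ZMod (2 ^ N)) (Space N)) :
    2 ^ (3 * N) ∣ 2 ^ max (m - 1) (3 * m / 2 - d - 2) *
      zeroCount m (fun x ↦ c + 2 * ℓ (lastScale d x) + 4 * Q (lastScale d x)) := by
  obtain h₁ | h₁ := isUnit_or_two_dvd (ℓ (1, 0, 0))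
  · exact dvd_two_pow_mul_of_le (two_pow_dvd_zeroCount_of_isUnit hm hmN c Q
      (by simp [lastScale_apply]) h₁) (le_max_left _ _)
  obtain h₂ | h₂ := isUnit_or_two_dvd (ℓ (0, 1, 0))
  · exact dvd_two_pow_mul_of_le (two_pow_dvd_zeroCount_of_isUnit hm hmN c Q
      (by simp [lastScale_apply]) h₂) (le_max_left _ _)
  obtain ⟨ℓ', hℓ⟩ := exists_eq_two_mul_add_last h₁ h₂
  obtain h₃ | ⟨γ, hγ⟩ := isUnit_or_two_dvd (ℓ (0, 0, 1))
  · exact dvd_two_pow_mul_of_le (two_pow_dvd_zeroCount_of_last_isUnit hm hmN ih c hℓ h₃)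
      (le_max_left _ _)
  · obtain ⟨ℓ'', half⟩ : ∃ ℓ'' : Space N →ₗ[ZMod (2 ^ N)] ZMod (2 ^ N), ∀ x, ℓ x = 2 * ℓ'' x := by
      refine ⟨ℓ' + γ • LinearMap.snd _ _ _ ∘ₗ LinearMap.snd _ _ _, fun x ↦ ?_⟩
      simp only [hℓ x, hγ, LinearMap.add_apply, LinearMap.smul_apply, LinearMap.comp_apply,
        LinearMap.snd_apply, smul_eq_mul]
      ring
    have four_mul := two_pow_dvd_zeroCount_add_four_mul (g := fun x ↦ ℓ'' x + Q x) hm hmN ih c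
      ⟨0, ℓ'', Q, by simp⟩
    convert four_mul using 4 with x
    rw [half]
    ring

/-- On a class modulo the image of `h`, the map `lastScale d` becomes twice `lastScale d'`. -/
theorem two_pow_dvd_zeroCount_of_card_ker {d' j : ℕ} (hm : 1 ≤ m) (hmN : m ≤ N)
    (ih : ∀ k < m, ZeroCountBound N d' k) {h : Space N →+ Space N} (hker : Nat.card h.ker = 2 ^ j)
    (hh : ∀ x, lastScale d (h x) = (2 : ZMod (2 ^ N)) • lastScale d' x)
    {f : Space N → ZMod (2 ^ N)} (hf : f ∈ quadraticFunctions (ZMod (2 ^ N)) (Space N)) :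
    2 ^ (3 * N) ∣ 2 ^ (max (m - 1) (3 * m / 2 - d' - 2) + j) *
      zeroCount m (fun x ↦ f (lastScale d x)) := by
  rw [pow_add, mul_assoc, ← hker]
  refine dvd_mul_card_ker_mul_zeroCount h fun g ↦ ?_
  obtain ⟨ℓ, Q, expansion⟩ := exists_expansion_of_mem_quadraticFunctions hf (lastScale d g)
  convert two_pow_dvd_zeroCount_add_two_mul hm hmN ih (f (lastScale d g)) ℓ Q using 4 with x
  rw [map_add, hh, expansion]
  norm_num

/-- Modulo 2 the indicator of `a = 0` is `1 + a`, and the third differences of `f` vanish. -/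
theorem two_dvd_zeroCount_one_cube (hN : N ≠ 0) {f : Space N → ZMod (2 ^ N)}
    (hf : f ∈ quadraticFunctions (ZMod (2 ^ N)) (Space N)) :
    2 ∣ zeroCount 1 fun t : ZMod 2 × ZMod 2 × ZMod 2 ↦ f (t.1.val, t.2.1.val, t.2.2.val) := by
  refine two_dvd_zeroCount_one hN (by decide) ?_
  have sum_zmod_two (φ : ZMod 2 → ZMod (2 ^ N)) : ∑ t, φ t = φ 0 + φ 1 := Fin.sum_univ_two φ
  convert two_dvd_sum_cube_of_mem_quadraticFunctions hf (1, 0, 0) (0, 1, 0) (0, 0, 1) using 1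
  simp only [Fintype.sum_prod_type, sum_zmod_two, ZMod.val_zero, ZMod.val_one, Nat.cast_zero,
    Nat.cast_one, Prod.mk_add_mk, add_zero, zero_add, Prod.mk_zero_zero]
  ring

theorem two_pow_dvd_four_mul_zeroCount_one (hN : N ≠ 0) {f : Space N → ZMod (2 ^ N)}
    (hf : f ∈ quadraticFunctions (ZMod (2 ^ N)) (Space N)) :
    2 ^ (3 * N) ∣ 4 * zeroCount 1 f := by
  let ρ₁ := ZMod.castHom (dvd_pow_self 2 hN) (ZMod 2)
  have ρ₁_surj : Function.Surjective ρ₁ := ZMod.castHom_surjective (dvd_pow_self 2 hN)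
  let ρ : Space N →+ ZMod 2 × ZMod 2 × ZMod 2 :=
    ρ₁.toAddMonoidHom.prodMap (ρ₁.toAddMonoidHom.prodMap ρ₁.toAddMonoidHom)
  have ρ_surj : Function.Surjective ρ := ρ₁_surj.prodMap (ρ₁_surj.prodMap ρ₁_surj)
  have reduce : zeroCount 1 f = Nat.card ρ.ker *
      zeroCount 1 fun t : ZMod 2 × ZMod 2 × ZMod 2 ↦ f (t.1.val, t.2.1.val, t.2.2.val) := by
    rw [← zeroCount_comp_of_surjective ρ ρ_surj]
    refine zeroCount_congr fun (x, y, z) ↦ dvd_iff_dvd_of_dvd_sub ?_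
    obtain ⟨x', hx⟩ := exists_eq_val_castHom_add_mul (dvd_pow_self 2 hN) x
    obtain ⟨y', hy⟩ := exists_eq_val_castHom_add_mul (dvd_pow_self 2 hN) y
    obtain ⟨z', hz⟩ := exists_eq_val_castHom_add_mul (dvd_pow_self 2 hN) z
    obtain ⟨ℓ, Q, expansion⟩ := exists_expansion_of_mem_quadraticFunctions hf
      ((ρ₁ x).val, (ρ₁ y).val, (ρ₁ z).val)
    have translate : f (x, y, z) = _ :=
      (congrArg f (Prod.ext hx (Prod.ext hy hz) : (x, y, z) = _)).trans (expansion 2 (x', y', z'))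
    refine ⟨ℓ (x', y', z') + 2 * Q (x', y', z'), ?_⟩
    rw [translate, pow_one, add_assoc]
    exact (add_sub_cancel_left _ _).trans (by ring)
  obtain ⟨k, even_count⟩ := two_dvd_zeroCount_one_cube hN hf
  have card_eq := card_ker_mul_card_of_surjective ρ ρ_surj
  rw [Nat.card_eq_fintype_card (α := Space N), card_space, Nat.card_prod, Nat.card_prod,
    Nat.card_zmod] at card_eq
  exact ⟨k, by rw [reduce, even_count, ← card_eq]; ring⟩

theorem zeroCountBound_zero (N d : ℕ) : ZeroCountBound N d 0 := fun f _ ↦ by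
  rw [zeroCount_zero, card_space]
  exact dvd_mul_left _ _

theorem zeroCountBound_of_le (hmN : m ≤ N) (d : ℕ) : ZeroCountBound N d m := by
  induction m using Nat.strong_induction_on generalizing d with
  | _ m ih =>
  obtain rfl | hm := Nat.eq_zero_or_pos m
  · exact zeroCountBound_zero N d
  have hN : N ≠ 0 := by omega
  replace ih (d : ℕ) : ∀ k < m, ZeroCountBound N d k := fun k hk ↦ ih k hk (by omega) d
  intro f hf
  let double : ZMod (2 ^ N) →+ ZMod (2 ^ N) := AddMonoidHom.mulLeft 2
  cases d with
  | zero =>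
    obtain rfl | hm2 := Nat.eq_or_lt_of_le hm
    · simpa [lastScale_zero] using two_pow_dvd_four_mul_zeroCount_one hN hf
    have recursion := two_pow_dvd_zeroCount_of_card_ker (d := 0) hm hmN (ih 0) (j := 3)
      (h := double.prodMap (double.prodMap double))
      (by rw [card_ker_prodMap, card_ker_prodMap, card_ker_two_mul hN]; rfl)
      (fun (x, y, z) ↦ by simp [double, lastScale_apply]) hf
    exact dvd_two_pow_mul_of_le recursion (by omega)
  | succ d =>
    have recursion := two_pow_dvd_zeroCount_of_card_ker (d := d + 1) hm hmN (ih d) (j := 2)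
      (h := double.prodMap (double.prodMap (.id _)))
      (by rw [card_ker_prodMap, card_ker_prodMap, card_ker_two_mul hN]; simp)
      (fun (x, y, z) ↦ by simp [double, lastScale_apply, pow_succ', mul_assoc]) hf
    exact dvd_two_pow_mul_of_le recursion (by omega)

end DensityRecursion

section ArithmeticProgressions

variable {N : ℕ}

theorem two_pow_dvd_zeroCount_sub_mul (d : ℕ) {f : Space N → ZMod (2 ^ N)}
    (hf : f ∈ quadraticFunctions (ZMod (2 ^ N)) (Space N)) (w : ZMod (2 ^ N)) :
    2 ^ (4 * N) ∣ 2 ^ (1 + max N (3 * N / 2 - d)) *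
      zeroCount N (fun x : ZMod (2 ^ N) × Space N ↦ f (lastScale d x.2) - w * x.1) := by
  classical
  obtain ⟨e, he, b, hb, rfl⟩ := exists_eq_two_pow_mul_isUnit w
  have lift := two_pow_mul_zeroCount_of_forall_translate he le_rfl
    (f := fun x : ZMod (2 ^ N) × Space N ↦ f (lastScale d x.2) - 2 ^ e * b * x.1) (1, 0)
    fun x ↦ ⟨0, -b, hb.neg, fun t ↦ by
      simp only [Prod.fst_add, Prod.snd_add, Prod.smul_mk, smul_zero, add_zero, smul_eq_mul,
        mul_one]
      ring⟩
  have drop_first : zeroCount e (fun x : ZMod (2 ^ N) × Space N ↦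
      f (lastScale d x.2) - 2 ^ e * b * x.1) = 2 ^ N * zeroCount e (fun x ↦ f (lastScale d x)) := by
    rw [zeroCount_congr (g := fun x : ZMod (2 ^ N) × Space N ↦ f (lastScale d x.2)) (e := e)
      fun x ↦ dvd_iff_dvd_of_dvd_sub ⟨-(b * x.1), by ring⟩,
      zeroCount_comp_snd fun y ↦ f (lastScale d y), ZMod.card]
  rw [drop_first, mul_left_comm] at lift
  rw [Nat.eq_of_mul_eq_mul_left (Nat.two_pow_pos N) lift, ← mul_assoc, ← pow_add]
  have bound := Nat.mul_dvd_mul_left (2 ^ N) (zeroCountBound_of_le he d f hf)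
  rw [← mul_assoc, ← pow_add, ← pow_add, show N + 3 * N = 4 * N by ring] at bound
  exact dvd_two_pow_mul_of_le bound (by omega)

theorem sum_fin_eq_sum_zmod {A : Type*} [AddCommMonoid A] (n : ℕ) [NeZero n] (F : ℕ → A) :
    ∑ i : Fin n, F i = ∑ y : ZMod n, F y.val :=
  by
  cases n with
  | zero => exact absurd rfl (NeZero.ne 0)
  | succ n => rfl

theorem two_pow_mul_sum_fin_two_pow {p : ℕ} (hp : p ≤ N) (F : ZMod (2 ^ N) → ℕ) :
    2 ^ (N - p) * ∑ i : Fin (2 ^ p), F (2 ^ (N - p) * (i : ℕ)) = ∑ t, F (2 ^ (N - p) * t) := by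
  have hdvd : 2 ^ p ∣ 2 ^ N := pow_dvd_pow 2 hp
  let ρ : ZMod (2 ^ N) →+ ZMod (2 ^ p) := (ZMod.castHom hdvd (ZMod (2 ^ p))).toAddMonoidHom
  have ρ_surj : Function.Surjective ρ := ZMod.castHom_surjective hdvd
  have card_ker : Nat.card ρ.ker = 2 ^ (N - p) := by
    have := card_ker_mul_card_of_surjective ρ ρ_surj
    rw [Nat.card_zmod, Nat.card_zmod] at this
    exact Nat.eq_of_mul_eq_mul_right (Nat.two_pow_pos p) (this.trans (pow_sub_mul_pow 2 hp).symm)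
  have factor (t : ZMod (2 ^ N)) :
      (2 : ZMod (2 ^ N)) ^ (N - p) * t = 2 ^ (N - p) * ((ρ t).val : ℕ) := by
    obtain ⟨s, hs⟩ := exists_eq_val_castHom_add_mul hdvd t
    have : (2 : ZMod (2 ^ N)) ^ (N - p) * 2 ^ p = 0 := by
      rw [pow_sub_mul_pow 2 hp, two_pow_eq_zero]
    calc (2 : ZMod (2 ^ N)) ^ (N - p) * t = 2 ^ (N - p) * (((ρ t).val : ℕ) + (2 ^ p : ℕ) * s) :=
          congrArg _ hs
      _ = 2 ^ (N - p) * ((ρ t).val : ℕ) := by push_cast; linear_combination s * this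
  rw [sum_congr rfl fun t _ ↦ congrArg F (factor t),
    sum_fin_eq_sum_zmod (2 ^ p) fun i ↦ F (2 ^ (N - p) * i),
    sum_comp_of_surjective ρ ρ_surj fun y ↦ F (2 ^ (N - p) * (y.val : ℕ)), card_ker, smul_eq_mul]

theorem two_pow_mul_sum_sum_fin_two_pow {p q : ℕ} (hp : p ≤ N) (hq : q ≤ N)
    (F : ZMod (2 ^ N) → ZMod (2 ^ N) → ℕ) :
    2 ^ (N - p) * (2 ^ (N - q) * ∑ i : Fin (2 ^ p), ∑ j : Fin (2 ^ q),
      F (2 ^ (N - p) * (i : ℕ)) (2 ^ (N - q) * (j : ℕ))) =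
    ∑ s, ∑ t, F (2 ^ (N - p) * s) (2 ^ (N - q) * t) := by
  rw [mul_sum]
  simp only [two_pow_mul_sum_fin_two_pow hq]
  exact two_pow_mul_sum_fin_two_pow hp fun a ↦ ∑ t, F a (2 ^ (N - q) * t)

/-- The left side minus the right side of the equation `Q (x, y, T (x, y) + u * z) = k + g * z`, as
a function of `(x, y, z)`. The argument of `Q` is spelled as in the theorem below. -/
noncomputable def planeSectionDefect (Q : MvPolynomial (Fin 3) (ZMod (2 ^ N)))
    (T : MvPolynomial (Fin 2) (ZMod (2 ^ N))) (k g u : ZMod (2 ^ N)) (x : Space N) :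
    ZMod (2 ^ N) :=
  MvPolynomial.eval (fun t : Fin 3 ↦ if h : (t : ℕ) < 2 then ![x.1, x.2.1] ⟨t, h⟩
    else MvPolynomial.eval ![x.1, x.2.1] T + u * x.2.2) Q - (k + g * x.2.2)

variable {Q : MvPolynomial (Fin 3) (ZMod (2 ^ N))} {T : MvPolynomial (Fin 2) (ZMod (2 ^ N))}

theorem planeSectionDefect_mem_quadraticFunctions (hQ : Q.totalDegree ≤ 2)
    (hT : T.totalDegree ≤ 1) (k g u : ZMod (2 ^ N)) :
    planeSectionDefect Q T k g u ∈ quadraticFunctions (ZMod (2 ^ N)) (Space N) := by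
  have last_mem (a : ZMod (2 ^ N)) :
      (fun x : Space N ↦ a * x.2.2) ∈ affineFunctions (ZMod (2 ^ N)) (Space N) :=
    coe_linearMap_mem_affineFunctions (a • LinearMap.snd _ _ _ ∘ₗ LinearMap.snd _ _ _ :
      Space N →ₗ[ZMod (2 ^ N)] ZMod (2 ^ N))
  have coord_mem (i : Fin 2) : (fun x : Space N ↦ ![x.1, x.2.1] i) ∈
      affineFunctions (ZMod (2 ^ N)) (Space N) := by
    fin_cases i
    exacts [coe_linearMap_mem_affineFunctions
        (LinearMap.fst _ _ _ : Space N →ₗ[ZMod (2 ^ N)] ZMod (2 ^ N)),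
      coe_linearMap_mem_affineFunctions
        (LinearMap.fst _ _ _ ∘ₗ LinearMap.snd _ _ _ : Space N →ₗ[ZMod (2 ^ N)] ZMod (2 ^ N))]
  refine sub_mem (eval_mem_quadraticFunctions (fun t ↦ ?_) hQ)
    (affineFunctions_le_quadraticFunctions (add_mem (const_mem_affineFunctions k) (last_mem g)))
  by_cases h : (t : ℕ) < 2
  · simpa only [h, dif_pos] using coord_mem ⟨t, h⟩
  · simp only [h, dif_neg, not_false_iff]
    exact add_mem (eval_mem_affineFunctions coord_mem hT) (last_mem u)

theorem sum_sum_card_eq_zeroCount (k w g u : ZMod (2 ^ N)) (c d : ℕ) :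
    ∑ s, ∑ t, Nat.card {x : Fin 2 → ZMod (2 ^ N) //
      MvPolynomial.eval (fun i : Fin 3 ↦ if h : (i : ℕ) < 2 then x ⟨i, h⟩
        else MvPolynomial.eval x T + u * (2 ^ d * t)) Q = k + w * (2 ^ c * s) + g * (2 ^ d * t)} =
    zeroCount N (fun x : ZMod (2 ^ N) × Space N ↦
      planeSectionDefect Q T k g u (lastScale d x.2) - w * 2 ^ c * x.1) := by
  classical
  let regroup : ZMod (2 ^ N) × ZMod (2 ^ N) × (Fin 2 → ZMod (2 ^ N)) ≃ ZMod (2 ^ N) × Space N :=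
    ⟨fun x ↦ (x.1, x.2.2 0, x.2.2 1, x.2.1), fun x ↦ (x.1, x.2.2.2, ![x.2.1, x.2.2.1]),
      fun x ↦ Prod.ext rfl (Prod.ext rfl ((finTwoArrowEquiv _).symm_apply_apply x.2.2)),
      fun _ ↦ rfl⟩
  rw [← zeroCount_comp_of_bijective regroup.bijective, zeroCount_eq_sum, Fintype.sum_prod_type]
  refine sum_congr rfl fun s _ ↦ ?_
  rw [Fintype.sum_prod_type]
  refine sum_congr rfl fun t _ ↦ ?_
  rw [Nat.card_eq_fintype_card, Fintype.card_subtype, card_filter]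
  refine sum_congr rfl fun x _ ↦ if_congr ?_ rfl rfl
  have pair : ![x 0, x 1] = x := (finTwoArrowEquiv _).symm_apply_apply x
  rw [two_pow_eq_zero, zero_dvd_iff, sub_eq_zero, planeSectionDefect, sub_eq_iff_eq_add',
    add_right_comm, mul_assoc]
  change _ ↔ MvPolynomial.eval (fun i : Fin 3 ↦ if h : (i : ℕ) < 2 then ![x 0, x 1] ⟨i, h⟩
    else MvPolynomial.eval ![x 0, x 1] T + u * (2 ^ d * t)) Q = _
  rw [pair]
  rfl

end ArithmeticProgressions

/-- Base case of the main theorem: for `Q` of degree ≤ 2 in 3 variables `(x, y, z)`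
over `ℤ/2^r`, the double sum of constrained solution counts is divisible by
`2^{r+⌈min(2v,r)/2⌉+q-1}`. -/
theorem stmt_3 (r : ℕ) (hr : 1 ≤ r)
    (Q : MvPolynomial (Fin 3) (ZMod (2 ^ r))) (hQ : Q.totalDegree ≤ 2)
    (q v : ℕ) (hq : q ≤ r) (hv : v ≤ r)
    (k w g u : ZMod (2 ^ r))
    (T : MvPolynomial (Fin 2) (ZMod (2 ^ r))) (hT : T.totalDegree ≤ 1) :
    (2 ^ (r + (min (2 * v) r + 1) / 2 + q - 1) : ℕ) ∣
    ∑ i : Fin (2 ^ q), ∑ j : Fin (2 ^ v),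
      Nat.card {x : Fin 2 → ZMod (2 ^ r) //
        MvPolynomial.eval
          (fun t : Fin 3 => if h : (t : ℕ) < 2 then x ⟨t, h⟩
            else MvPolynomial.eval x T
              + u * (2 : ZMod (2 ^ r)) ^ (r - v) * ((j : ℕ) : ZMod (2 ^ r))) Q
          = k + w * (2 : ZMod (2 ^ r)) ^ (r - q) * ((i : ℕ) : ZMod (2 ^ r))
              + g * (2 : ZMod (2 ^ r)) ^ (r - v) * ((j : ℕ) : ZMod (2 ^ r))} := by
  let count (a b : ZMod (2 ^ r)) : ℕ := Nat.card {x : Fin 2 → ZMod (2 ^ r) //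
    MvPolynomial.eval (fun t : Fin 3 ↦ if h : (t : ℕ) < 2 then x ⟨t, h⟩
      else MvPolynomial.eval x T + u * b) Q = k + w * a + g * b}
  have rescale := (two_pow_mul_sum_sum_fin_two_pow hq hv count).trans
    (sum_sum_card_eq_zeroCount k w g u (r - q) (r - v))
  have bound := two_pow_dvd_zeroCount_sub_mul (r - v)
    (planeSectionDefect_mem_quadraticFunctions hQ hT k g u) (w * 2 ^ (r - q))
  have exponent : 4 * r = 1 + max r (3 * r / 2 - (r - v)) +
      (r - q + (r - v + (r + (min (2 * v) r + 1) / 2 + q - 1))) := by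
    omega
  rw [← rescale, exponent, pow_add, pow_add 2 (r - q), pow_add 2 (r - v)] at bound
  have cancelled := Nat.dvd_of_mul_dvd_mul_left (Nat.two_pow_pos _) bound
  simpa only [count, ← mul_assoc] using Nat.dvd_of_mul_dvd_mul_left (Nat.two_pow_pos _)
    (Nat.dvd_of_mul_dvd_mul_left (Nat.two_pow_pos _) cancelled)
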